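/- arXiv:1907.09166 — 4 statements merged into one kernel-verified Lean document; each statement's English description precedes it below -/
import Mathlib

section
/- Let V : ℝ^d → ℝ and b : ℝ^d → ℝ^d be smooth with ⟨b(x), ∇V(x)⟩ = 0 for all x ∈ ℝ^d, and let s be a saddle point of V (∇V(s) = 0, Hess V(s) invertible with exactly one negative eigenvalue). Then the real d×d matrix Hess V(s) + B(s)ᵀ admits precisely one negative eigenvalue: there exists a unique μ < 0 such that (Hess V(s) + B(s)ᵀ)ξ = μξ for some nonzero ξ ∈ ℝ^d, and moreover the eigenspace ker(Hess V(s) + B(s)ᵀ − μ·I_d) is one-dimensional (geometric multiplicity one). -/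
/-! Write `H = Hess V(s)` and `C = B(s)ᵀ`. Differentiating `⟨b, ∇V⟩ = 0` once at `s` gives
`H b(s) = 0`, hence `b(s) = 0`; differentiating twice then gives that `C H` is antisymmetric
(`jac_hess_antisymm`). The rest is linear algebra about `A = H + C`.

*Existence.* `A H = H² + C H` has positive definite symmetric part, so `det (A H) > 0`
(`det_pos_of_antisymm`), while `det H < 0` since exactly one eigenvalue is negative. Thus
`det A < 0`, and the segment from `A` to the identity meets a singular matrix, which yields a
negative eigenvalue (`exists_neg_eigenvalue`).

*Uniqueness and multiplicity.* If `A ξᵢ = μᵢ ξᵢ` with `μᵢ < 0` and `ξᵢ = H ηᵢ`, the antisymmetry of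
`C H` gives `2 ⟨ξᵢ, ξⱼ⟩ = (μᵢ + μⱼ) ⟨ηᵢ, H ηⱼ⟩`. So for independent `ξ₁, ξ₂` the form
`⟨η, H η⟩` would be negative definite on the plane spanned by `η₁, η₂`; but it is nonnegative on a
hyperplane, which meets that plane. Hence any two such `ξ₁, ξ₂` are linearly dependent
(`dependent_of_neg_eigenvectors`). -/

open Matrix

/-- Partial derivative `∂_i f` of a real-valued function on `ℝ^d`. -/
noncomputable def pdR {d : ℕ} (f : (Fin d → ℝ) → ℝ) (i : Fin d) : (Fin d → ℝ) → ℝ :=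
  fun x => fderiv ℝ f x (Pi.single i 1)

/-- Euclidean gradient `∇V`. -/
noncomputable def gradV {d : ℕ} (V : (Fin d → ℝ) → ℝ) (x : Fin d → ℝ) : Fin d → ℝ :=
  fun i => pdR V i x

/-- Hessian matrix `Hess V(x)`, with entries `∂_i ∂_j V(x)`. -/
noncomputable def hessM {d : ℕ} (V : (Fin d → ℝ) → ℝ) (x : Fin d → ℝ) :
    Matrix (Fin d) (Fin d) ℝ :=
  fun i j => pdR (pdR V j) i x

/-- Jacobian matrix `B(x)` of a vector field `b`, with entries `∂_j b_i(x)`. -/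
noncomputable def jacM {d : ℕ} (b : (Fin d → ℝ) → Fin d → ℝ) (x : Fin d → ℝ) :
    Matrix (Fin d) (Fin d) ℝ :=
  fun i j => pdR (fun y => b y i) j x

/-! ### Derivatives of the orthogonality relation -/

lemma contDiff_pdR {d : ℕ} {f : (Fin d → ℝ) → ℝ} (hf : ContDiff ℝ (⊤ : ℕ∞) f) (i : Fin d) :
    ContDiff ℝ (⊤ : ℕ∞) (pdR f i) := by
  unfold pdR
  exact (hf.fderiv_right (m := (⊤ : ℕ∞)) (by simp)).clm_apply contDiff_const

lemma pdR_sum_mul {d : ℕ} {f g : Fin d → (Fin d → ℝ) → ℝ}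
    (hf : ∀ i, ContDiff ℝ (⊤ : ℕ∞) (f i)) (hg : ∀ i, ContDiff ℝ (⊤ : ℕ∞) (g i))
    (j : Fin d) (x : Fin d → ℝ) :
    pdR (fun y => ∑ i, f i y * g i y) j x
      = ∑ i, (f i x * pdR (g i) j x + g i x * pdR (f i) j x) := by
  have h : HasFDerivAt (fun y => ∑ i, f i y * g i y)
      (∑ i, (f i x • fderiv ℝ (g i) x + g i x • fderiv ℝ (f i) x)) x := by
    apply HasFDerivAt.fun_sum
    intro i _
    exact (((hf i).differentiable (by simp)) x).hasFDerivAt.mul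
      (((hg i).differentiable (by simp)) x).hasFDerivAt
  simp [pdR, h.fderiv, _root_.sum_apply]

lemma pdR_add {d : ℕ} {f g : (Fin d → ℝ) → ℝ}
    (hf : ContDiff ℝ (⊤ : ℕ∞) f) (hg : ContDiff ℝ (⊤ : ℕ∞) g) (j : Fin d) (x : Fin d → ℝ) :
    pdR (fun y => f y + g y) j x = pdR f j x + pdR g j x := by
  have h := ((hf.differentiable (by simp)) x).hasFDerivAt.add
    ((hg.differentiable (by simp)) x).hasFDerivAt
  have h2 : fderiv ℝ (fun y => f y + g y) x = fderiv ℝ f x + fderiv ℝ g x := h.fderiv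
  simp [pdR, h2]

lemma jac_hess_antisymm {d : ℕ} {V : (Fin d → ℝ) → ℝ} {b : (Fin d → ℝ) → Fin d → ℝ}
    (hV : ContDiff ℝ (⊤ : ℕ∞) V) (hb : ContDiff ℝ (⊤ : ℕ∞) b)
    (horth : ∀ x, ∑ i, b x i * gradV V x i = 0)
    {s : Fin d → ℝ} (hcrit : gradV V s = 0)
    (hsymm : (hessM V s)ᵀ = hessM V s) (hdet : (hessM V s).det ≠ 0) :
    ((jacM b s)ᵀ * hessM V s)ᵀ = -((jacM b s)ᵀ * hessM V s) := by
  have hbi : ∀ i, ContDiff ℝ (⊤ : ℕ∞) (fun y => b y i) := fun i => contDiff_pi.1 hb i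
  have hgi : ∀ i, ContDiff ℝ (⊤ : ℕ∞) (pdR V i) := fun i => contDiff_pdR hV i
  have hg0 : ∀ i, pdR V i s = 0 := fun i => congrFun hcrit i
  have h0 : (fun y => ∑ i, b y i * pdR V i y) = fun _ => (0 : ℝ) := funext horth
  have h1 : ∀ j x, ∑ i, (b x i * pdR (pdR V i) j x + pdR V i x * pdR (fun y => b y i) j x) = 0 := by
    intro j x
    rw [← pdR_sum_mul hbi hgi j x, h0]
    simp [pdR]
  have hb0 : b s = 0 := by
    apply Matrix.eq_zero_of_mulVec_eq_zero hdet
    ext j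
    have := h1 j s
    simp only [hg0, zero_mul, add_zero] at this
    simp only [Matrix.mulVec, dotProduct, hessM, Pi.zero_apply]
    rw [← this]
    exact Finset.sum_congr rfl fun i _ => mul_comm _ _
  have h2 : ∀ j k, ∑ i, (pdR (pdR V i) j s * pdR (fun y => b y i) k s
      + pdR (fun y => b y i) j s * pdR (pdR V i) k s) = 0 := by
    intro j k
    have e : (fun x => (∑ i, b x i * pdR (pdR V i) j x)
        + ∑ i, pdR V i x * pdR (fun y => b y i) j x) = fun _ => (0 : ℝ) := by
      funext x
      rw [← Finset.sum_add_distrib]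
      exact h1 j x
    have e1 : pdR (fun x => (∑ i, b x i * pdR (pdR V i) j x)
        + ∑ i, pdR V i x * pdR (fun y => b y i) j x) k s = 0 := by
      rw [e]; simp [pdR]
    rw [pdR_add (ContDiff.sum fun i _ => (hbi i).mul (contDiff_pdR (hgi i) j))
      (ContDiff.sum fun i _ => (hgi i).mul (contDiff_pdR (hbi i) j)),
      pdR_sum_mul hbi (fun i => contDiff_pdR (hgi i) j),
      pdR_sum_mul hgi (fun i => contDiff_pdR (hbi i) j), ← Finset.sum_add_distrib] at e1
    rw [← e1]
    refine Finset.sum_congr rfl fun i _ => ?_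
    simp [hg0, hb0]
  ext j k
  have hs : ∀ i j, hessM V s i j = hessM V s j i := fun i j => congrFun (congrFun hsymm j) i
  rw [Matrix.transpose_apply, Matrix.neg_apply, eq_neg_iff_add_eq_zero]
  simp only [Matrix.mul_apply, Matrix.transpose_apply, ← Finset.sum_add_distrib]
  rw [← h2 j k]
  refine Finset.sum_congr rfl fun i _ => ?_
  rw [hs i j, hs i k]
  simp only [hessM, jacM]
  ring

/-! ### Linear algebra -/

lemma dotProduct_mulVec_self_antisymm {d : ℕ} {J : Matrix (Fin d) (Fin d) ℝ} (hJ : Jᵀ = -J)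
    (x y : Fin d → ℝ) : x ⬝ᵥ J *ᵥ y = -(y ⬝ᵥ J *ᵥ x) := by
  rw [Matrix.dotProduct_mulVec, ← Matrix.mulVec_transpose, hJ, Matrix.neg_mulVec,
    neg_dotProduct, dotProduct_comm]

lemma dotProduct_mulVec_symm {d : ℕ} {H : Matrix (Fin d) (Fin d) ℝ} (hH : Hᵀ = H)
    (x y : Fin d → ℝ) : x ⬝ᵥ H *ᵥ y = (H *ᵥ x) ⬝ᵥ y := by
  rw [Matrix.dotProduct_mulVec, ← Matrix.mulVec_transpose, hH]

/-- By continuity along `t ↦ H² + t J`, which never becomes singular because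
`⟨x, (H² + t J) x⟩ = |H x|²`. -/
lemma det_pos_of_antisymm {d : ℕ} {H J : Matrix (Fin d) (Fin d) ℝ} (hH : Hᵀ = H)
    (hdet : H.det ≠ 0) (hJ : Jᵀ = -J) : 0 < (H * H + J).det := by
  by_contra! hneg
  have hcont : Continuous fun t : ℝ => (H * H + t • J).det := by fun_prop
  obtain ⟨t, -, ht⟩ : (0 : ℝ) ∈ (fun t : ℝ => (H * H + t • J).det) '' Set.Icc 0 1 := by
    apply intermediate_value_Icc' zero_le_one hcont.continuousOn
    refine ⟨by simpa using hneg, ?_⟩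
    simp only [zero_smul, add_zero, Matrix.det_mul]
    exact mul_self_nonneg _
  obtain ⟨x, hx0, hx⟩ := Matrix.exists_mulVec_eq_zero_iff.2 ht
  have h1 : x ⬝ᵥ (H * H + t • J) *ᵥ x = 0 := by rw [hx]; simp
  have h2 := dotProduct_mulVec_self_antisymm hJ x x
  rw [Matrix.add_mulVec, dotProduct_add, Matrix.smul_mulVec, dotProduct_smul,
    ← Matrix.mulVec_mulVec, dotProduct_mulVec_symm hH, show x ⬝ᵥ J *ᵥ x = 0 by linarith] at h1
  simp only [smul_zero, add_zero] at h1
  exact hx0 (Matrix.eq_zero_of_mulVec_eq_zero hdet (dotProduct_self_eq_zero.1 h1))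

lemma exists_neg_eigenvalue {d : ℕ} {A : Matrix (Fin d) (Fin d) ℝ} (hA : A.det < 0) :
    ∃ μ : ℝ, μ < 0 ∧ ∃ ξ : Fin d → ℝ, ξ ≠ 0 ∧ A *ᵥ ξ = μ • ξ := by
  have hcont : Continuous fun u : ℝ => ((1 - u) • A + u • (1 : Matrix (Fin d) (Fin d) ℝ)).det := by
    fun_prop
  obtain ⟨u, ⟨hu0, hu1⟩, hu⟩ : (0 : ℝ) ∈
      (fun u : ℝ => ((1 - u) • A + u • (1 : Matrix (Fin d) (Fin d) ℝ)).det) '' Set.Ioo 0 1 := by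
    apply intermediate_value_Ioo zero_le_one hcont.continuousOn
    simpa using hA
  obtain ⟨x, hx0, hx⟩ := Matrix.exists_mulVec_eq_zero_iff.2 hu
  have h1u : 0 < 1 - u := by linarith
  refine ⟨-(u / (1 - u)), by simpa using div_pos hu0 h1u, x, hx0, ?_⟩
  rw [Matrix.add_mulVec, Matrix.smul_mulVec, Matrix.smul_mulVec, Matrix.one_mulVec] at hx
  ext i
  have hi := congrFun hx i
  simp only [Pi.add_apply, Pi.smul_apply, smul_eq_mul, Pi.zero_apply] at hi ⊢
  field_simp
  linarith

lemma det_neg_of_unique_neg {d : ℕ} {H : Matrix (Fin d) (Fin d) ℝ} (hherm : H.IsHermitian)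
    (hdet : H.det ≠ 0) (hone : ∃! i : Fin d, hherm.eigenvalues i < 0) : H.det < 0 := by
  obtain ⟨i₀, hi₀, huniq⟩ := hone
  have h := hherm.det_eq_prod_eigenvalues
  simp only [RCLike.ofReal_real_eq_id, id] at h
  rw [← Finset.mul_prod_erase _ _ (Finset.mem_univ i₀)] at h
  have hnn : 0 ≤ ∏ i ∈ Finset.univ.erase i₀, hherm.eigenvalues i := by
    apply Finset.prod_nonneg
    intro i hi
    by_contra! hlt
    exact (Finset.ne_of_mem_erase hi) (huniq i hlt)
  exact lt_of_le_of_ne (h ▸ mul_nonpos_of_nonpos_of_nonneg hi₀.le hnn) hdet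

/-- The functional `ℓ` is the coordinate along the eigenvector of the negative eigenvalue. -/
lemma exists_nonneg_hyperplane {d : ℕ} {H : Matrix (Fin d) (Fin d) ℝ} (hherm : H.IsHermitian)
    (hone : ∃! i : Fin d, hherm.eigenvalues i < 0) :
    ∃ ℓ : (Fin d → ℝ) →ₗ[ℝ] ℝ, ∀ x, ℓ x = 0 → 0 ≤ x ⬝ᵥ H *ᵥ x := by
  obtain ⟨i₀, hi₀, huniq⟩ := hone
  set U : Matrix (Fin d) (Fin d) ℝ := (hherm.eigenvectorUnitary : Matrix (Fin d) (Fin d) ℝ) with hU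
  have hspec : H = U * Matrix.diagonal hherm.eigenvalues * Uᵀ := by
    have := hherm.spectral_theorem
    rw [Unitary.conjStarAlgAut_apply] at this
    simpa [Matrix.star_eq_conjTranspose, Function.comp_def] using this
  refine ⟨LinearMap.proj i₀ ∘ₗ Matrix.toLin' Uᵀ, fun x hx => ?_⟩
  have hx' : (Uᵀ *ᵥ x) i₀ = 0 := by simpa using hx
  have hq : x ⬝ᵥ H *ᵥ x = ∑ i, hherm.eigenvalues i * (Uᵀ *ᵥ x) i ^ 2 := by
    have e : x ⬝ᵥ H *ᵥ x
        = (Uᵀ *ᵥ x) ⬝ᵥ Matrix.diagonal hherm.eigenvalues *ᵥ (Uᵀ *ᵥ x) := by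
      conv_lhs => rw [hspec]
      rw [← Matrix.mulVec_mulVec, ← Matrix.mulVec_mulVec, Matrix.dotProduct_mulVec,
        ← Matrix.mulVec_transpose]
    rw [e]
    simp only [dotProduct, Matrix.mulVec_diagonal]
    exact Finset.sum_congr rfl fun i _ => by ring
  rw [hq]
  apply Finset.sum_nonneg
  intro i _
  by_cases hi : i = i₀
  · rw [hi, hx']; simp
  · have : 0 ≤ hherm.eigenvalues i := by
      by_contra! hlt
      exact hi (huniq i hlt)
    positivity

/-- Completing the square shows that the quadratic form in the hypothesis, whose Gram-type matrix is
`2 / (mᵢ + mⱼ)`, is nonnegative, and that it can only vanish if `p + q = 0`. -/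
lemma add_eq_zero_of_cauchy_form {d : ℕ} {p q : Fin d → ℝ} {m n : ℝ} (hm : 0 < m) (hn : 0 < n)
    (h : p ⬝ᵥ p / m + 4 * (p ⬝ᵥ q) / (m + n) + q ⬝ᵥ q / n ≤ 0) : p + q = 0 := by
  set r : Fin d → ℝ := p + (2 * m / (m + n)) • q with hr
  have hr2 : r ⬝ᵥ r = p ⬝ᵥ p + 2 * (2 * m / (m + n)) * (p ⬝ᵥ q)
      + (2 * m / (m + n)) ^ 2 * (q ⬝ᵥ q) := by
    simp only [hr, dotProduct_add, add_dotProduct, dotProduct_smul, smul_dotProduct, smul_eq_mul,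
      dotProduct_comm q p]
    ring
  have hrn : 0 ≤ r ⬝ᵥ r := by simpa [dotProduct] using Finset.sum_nonneg fun i _ => mul_self_nonneg _
  have hqn : 0 ≤ q ⬝ᵥ q := by simpa [dotProduct] using Finset.sum_nonneg fun i _ => mul_self_nonneg _
  have hmn : 0 < m + n := by positivity
  have key : p ⬝ᵥ p / m + 4 * (p ⬝ᵥ q) / (m + n) + q ⬝ᵥ q / n
      = r ⬝ᵥ r / m + (m - n) ^ 2 / (n * (m + n) ^ 2) * (q ⬝ᵥ q) := by
    rw [hr2]; field_simp; ring
  rw [key] at h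
  have t1 : 0 ≤ r ⬝ᵥ r / m := by positivity
  have t2 : 0 ≤ (m - n) ^ 2 / (n * (m + n) ^ 2) * (q ⬝ᵥ q) := by positivity
  have hr0 : r = 0 := by
    have : r ⬝ᵥ r / m = 0 := by linarith
    rw [div_eq_zero_iff] at this
    exact dotProduct_self_eq_zero.1 (this.resolve_right hm.ne')
  have hz : (m - n) ^ 2 / (n * (m + n) ^ 2) * (q ⬝ᵥ q) = 0 := by linarith
  rcases mul_eq_zero.1 hz with hz | hz
  · have hmn' : m = n := by
      rw [div_eq_zero_iff] at hz
      have := hz.resolve_right (by positivity)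
      exact sub_eq_zero.1 (pow_eq_zero_iff two_ne_zero |>.1 this)
    rw [← hr0, hr, hmn', show 2 * n / (n + n) = 1 by field_simp; ring, one_smul]
  · have hq0 : q = 0 := dotProduct_self_eq_zero.1 hz
    rw [← hr0, hr, hq0, smul_zero]

lemma dependent_of_neg_eigenvectors {d : ℕ} {H C : Matrix (Fin d) (Fin d) ℝ} (hH : Hᵀ = H)
    (hdet : H.det ≠ 0) (hC : (C * H)ᵀ = -(C * H))
    {ℓ : (Fin d → ℝ) →ₗ[ℝ] ℝ} (hℓ : ∀ x, ℓ x = 0 → 0 ≤ x ⬝ᵥ H *ᵥ x)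
    {μ ν : ℝ} (hμ : μ < 0) (hν : ν < 0) {ξ ζ : Fin d → ℝ}
    (hξ : (H + C) *ᵥ ξ = μ • ξ) (hζ : (H + C) *ᵥ ζ = ν • ζ) :
    ∃ a c : ℝ, (a ≠ 0 ∨ c ≠ 0) ∧ a • ξ + c • ζ = 0 := by
  have hsurj : ∀ y : Fin d → ℝ, ∃ x, H *ᵥ x = y := fun y =>
    ⟨H⁻¹ *ᵥ y, by rw [Matrix.mulVec_mulVec, Matrix.mul_nonsing_inv _ hdet.isUnit,
      Matrix.one_mulVec]⟩
  obtain ⟨x, rfl⟩ := hsurj ξ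
  obtain ⟨z, rfl⟩ := hsurj ζ
  have rel : ∀ (u v : Fin d → ℝ) (κ : ℝ), (H + C) *ᵥ (H *ᵥ v) = κ • (H *ᵥ v) →
      (H *ᵥ u) ⬝ᵥ (H *ᵥ v) + u ⬝ᵥ (C * H) *ᵥ v = κ * (u ⬝ᵥ H *ᵥ v) := by
    intro u v κ hv
    have := congrArg (fun w => u ⬝ᵥ w) hv
    simp only [Matrix.add_mulVec, dotProduct_add, dotProduct_smul, smul_eq_mul] at this
    rw [← this, dotProduct_mulVec_symm hH u, Matrix.mulVec_mulVec v C H]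
  have anti := dotProduct_mulVec_self_antisymm hC
  have exx := rel x x μ hξ
  have ezz := rel z z ν hζ
  have exz := rel x z ν hζ
  have ezx := rel z x μ hξ
  have axx := anti x x
  have azz := anti z z
  have axz := anti x z
  have hsym : z ⬝ᵥ H *ᵥ x = x ⬝ᵥ H *ᵥ z := by
    rw [dotProduct_mulVec_symm hH z x, dotProduct_comm]
  rw [hsym, dotProduct_comm (H *ᵥ z)] at ezx
  have hxx : x ⬝ᵥ H *ᵥ x = (H *ᵥ x) ⬝ᵥ (H *ᵥ x) / μ := by
    rw [eq_div_iff hμ.ne]; linarith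
  have hzz : z ⬝ᵥ H *ᵥ z = (H *ᵥ z) ⬝ᵥ (H *ᵥ z) / ν := by
    rw [eq_div_iff hν.ne]; linarith
  have hxz : x ⬝ᵥ H *ᵥ z = 2 * ((H *ᵥ x) ⬝ᵥ (H *ᵥ z)) / (μ + ν) := by
    rw [eq_div_iff (by linarith)]; linarith
  obtain ⟨a, c, hac, hker⟩ : ∃ a c : ℝ, (a ≠ 0 ∨ c ≠ 0) ∧ ℓ (a • x + c • z) = 0 := by
    by_cases h : ℓ x = 0
    · exact ⟨1, 0, by simp, by simp [h]⟩
    · exact ⟨ℓ z, -ℓ x, by simp [h], by simp; ring⟩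
  refine ⟨a, c, hac, add_eq_zero_of_cauchy_form (neg_pos.2 hμ) (neg_pos.2 hν) ?_⟩
  have hq := hℓ _ hker
  simp only [Matrix.mulVec_add, Matrix.mulVec_smul, dotProduct_add, add_dotProduct,
    dotProduct_smul, smul_dotProduct, smul_eq_mul, hsym, hxx, hzz, hxz] at hq
  simp only [dotProduct_smul, smul_dotProduct, smul_eq_mul]
  rw [← neg_add, div_neg, div_neg, div_neg]
  have e : ∀ P Q R : ℝ, -(a * (a * P) / μ) + -(4 * (c * (a * Q)) / (μ + ν)) + -(c * (c * R) / ν)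
      = -(a * (a * (P / μ) + c * (2 * Q / (μ + ν)))
        + c * (a * (2 * Q / (μ + ν)) + c * (R / ν))) := by
    intro P Q R; ring
  linarith [e ((H *ᵥ x) ⬝ᵥ (H *ᵥ x)) ((H *ᵥ x) ⬝ᵥ (H *ᵥ z)) ((H *ᵥ z) ⬝ᵥ (H *ᵥ z))]

/-! ### The negative eigenvalue of `Hess V(s) + B(s)ᵀ` -/

/-- If `⟨b, ∇V⟩ ≡ 0` and `s` is a saddle point of `V` (critical point whose Hessian is
invertible with exactly one negative eigenvalue), then the matrix `Hess V(s) + B(s)ᵀ`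
admits precisely one negative eigenvalue `μ`, which moreover has geometric
multiplicity one. -/
theorem hess_add_jacT_unique_neg_eigenvalue
    (d : ℕ) (hd : 1 ≤ d)
    (V : (Fin d → ℝ) → ℝ) (b : (Fin d → ℝ) → Fin d → ℝ)
    (hV : ContDiff ℝ (⊤ : ℕ∞) V) (hb : ContDiff ℝ (⊤ : ℕ∞) b)
    (horth : ∀ x, ∑ i, b x i * gradV V x i = 0)
    (s : Fin d → ℝ)
    (hcrit : gradV V s = 0)
    (hherm : (hessM V s).IsHermitian)
    (hdet : (hessM V s).det ≠ 0)
    (hone : ∃! i : Fin d, hherm.eigenvalues i < 0) :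
    (∃! μ : ℝ, μ < 0 ∧ ∃ ξ : Fin d → ℝ, ξ ≠ 0 ∧
        (hessM V s + (jacM b s)ᵀ).mulVec ξ = μ • ξ) ∧
      ∀ μ : ℝ, μ < 0 →
        (∃ ξ : Fin d → ℝ, ξ ≠ 0 ∧ (hessM V s + (jacM b s)ᵀ).mulVec ξ = μ • ξ) →
        Module.finrank ℝ
          ↥(LinearMap.ker (Matrix.toLin'
              (hessM V s + (jacM b s)ᵀ - μ • (1 : Matrix (Fin d) (Fin d) ℝ)))) = 1 := by
  have hH : (hessM V s)ᵀ = hessM V s := by simpa [Matrix.IsHermitian] using hherm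
  have hC := jac_hess_antisymm hV hb horth hcrit hH hdet
  obtain ⟨ℓ, hℓ⟩ := exists_nonneg_hyperplane hherm hone
  have hHneg := det_neg_of_unique_neg hherm hdet hone
  have hAneg : (hessM V s + (jacM b s)ᵀ).det < 0 := by
    have h := det_pos_of_antisymm hH hdet hC
    rw [← Matrix.add_mul, Matrix.det_mul] at h
    by_contra! hle
    linarith [mul_nonpos_of_nonneg_of_nonpos hle hHneg.le]
  refine ⟨?_, ?_⟩
  · obtain ⟨μ, hμ, ξ, hξ0, hξ⟩ := exists_neg_eigenvalue hAneg
    refine ⟨μ, ⟨hμ, ξ, hξ0, hξ⟩, ?_⟩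
    rintro ν ⟨hν, ζ, hζ0, hζ⟩
    obtain ⟨a, c, hac, h⟩ := dependent_of_neg_eigenvectors hH hdet hC hℓ hμ hν hξ hζ
    by_contra hne
    -- Eigenvectors of distinct eigenvalues are independent: apply the matrix to `h`.
    have h' := congrArg (fun w => (hessM V s + (jacM b s)ᵀ) *ᵥ w) h
    simp only [Matrix.mulVec_add, Matrix.mulVec_smul, hξ, hζ, Matrix.mulVec_zero] at h'
    have hc : (c * (ν - μ)) • ζ = 0 := by
      have e : (c * (ν - μ)) • ζ = (a • μ • ξ + c • ν • ζ) - μ • (a • ξ + c • ζ) := by module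
      rw [e, h, h']; simp
    have hc0 : c = 0 := by
      simpa [hζ0, sub_ne_zero.2 hne] using hc
    have ha0 : a = 0 := by simpa [hc0, hξ0] using h
    simp [hc0, ha0] at hac
  · rintro μ hμ ⟨ξ, hξ0, hξ⟩
    have hmem : ∀ w : Fin d → ℝ, w ∈ LinearMap.ker (Matrix.toLin'
        (hessM V s + (jacM b s)ᵀ - μ • (1 : Matrix (Fin d) (Fin d) ℝ))) ↔
        (hessM V s + (jacM b s)ᵀ) *ᵥ w = μ • w := by
      intro w
      rw [LinearMap.mem_ker, Matrix.toLin'_apply, Matrix.sub_mulVec, Matrix.smul_mulVec,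
        Matrix.one_mulVec, sub_eq_zero]
    refine (finrank_eq_one_iff_of_nonzero' ⟨ξ, (hmem ξ).2 hξ⟩ ?_).2 ?_
    · simpa [Subtype.ext_iff] using hξ0
    rintro ⟨w, hw⟩
    obtain ⟨a, c, hac, h⟩ :=
      dependent_of_neg_eigenvectors hH hdet hC hℓ hμ hμ hξ ((hmem w).1 hw)
    have hc : c ≠ 0 := by
      rintro rfl
      have ha0 : a = 0 := by simpa [hξ0] using h
      simp [ha0] at hac
    refine ⟨-(c⁻¹ * a), Subtype.ext ?_⟩
    change -(c⁻¹ * a) • ξ = w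
    have e : w = c⁻¹ • (a • ξ + c • w) - (c⁻¹ * a) • ξ := by
      rw [smul_add, smul_smul, smul_smul, inv_mul_cancel₀ hc]; module
    rw [h] at e
    rw [neg_smul]
    simpa using e.symm
end

section
/- Let V : ℝ^d → ℝ and b : ℝ^d → ℝ^d be smooth with ⟨b(x), ∇V(x)⟩ = 0 for all x ∈ ℝ^d, let s be a saddle point of V (∇V(s) = 0, Hess V(s) invertible with exactly one negative eigenvalue), let μ < 0 be a negative eigenvalue of Hess V(s) + B(s)ᵀ and let ξ ∈ ℝ^d be a unit vector with (Hess V(s) + B(s)ᵀ)ξ = μξ. Then the real symmetric matrix M_V := Hess V(s) + 2|μ|·ξξᵀ is positive definite and det M_V = − det Hess V(s). -/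
/-!
Write `H` for the Hessian of `V` at `s` and `B` for the Jacobian of `b` at `s`. Dividing
`⟨b, ∇V⟩ = 0` along the line `t ↦ s + t v` by `t`, respectively `t ^ 2`, and letting `t → 0` gives
`b s = 0` (as `H` is invertible) and then `⟨B v, H v⟩ = 0` for every `v`
(`jacM_dotProduct_hessM_eq_zero`). With `η = H⁻¹ ξ`, pairing the eigenvector equation
`(H + Bᵀ) ξ = μ ξ` with `η` gives `1 + ⟨B η, H η⟩ = μ ⟨η, ξ⟩`, hence `⟨η, ξ⟩ = 1 / μ`.

The determinant identity is then the rank-one formula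
`det (H + 2 |μ| ξ ξᵀ) = det H * (1 + 2 |μ| ⟨ξ, η⟩) = - det H`.

For positivity, `⟨η, H η⟩ = 1 / μ < 0`, so since `H` has exactly one negative eigenvalue it is
positive definite on the `H`-orthogonal complement of `η` (`pos_of_conj_neg`). Writing
`x = c η + y` with `y` in that complement, `⟨ξ, x⟩ = c / μ`, and the form of `H + 2 |μ| ξ ξᵀ` at `x`
equals `c ^ 2 / |μ| + ⟨y, H y⟩`, which is positive unless `x = 0`.
-/

open Matrix

lemma hasDerivAt_line {d : ℕ} {f : (Fin d → ℝ) → ℝ} {s : Fin d → ℝ}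
    (hf : DifferentiableAt ℝ f s) (v : Fin d → ℝ) :
    HasDerivAt (fun t : ℝ => f (s + t • v)) (∑ i, v i * pdR f i s) 0 := by
  have hl : HasDerivAt (fun t : ℝ => s + t • v) v 0 := by
    simpa using ((hasDerivAt_id (0 : ℝ)).smul_const v).const_add s
  have h0 : HasFDerivAt f (fderiv ℝ f s) (s + (0 : ℝ) • v) := by
    simpa using hf.hasFDerivAt
  have h := h0.comp_hasDerivAt (0 : ℝ) hl
  have e : fderiv ℝ f s v = ∑ i, v i * pdR f i s := by
    conv_lhs => rw [pi_eq_sum_univ' v, map_sum]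
    refine Finset.sum_congr rfl fun i _ => ?_
    rw [map_smul, smul_eq_mul]
    unfold pdR
    congr 2
  rw [← e]
  exact h

/-- If `u t` and `w t` are orthogonal for every `t`, `w` vanishes at `0` and both are differentiable
there, then `u 0` is orthogonal to the derivative of `w`; if `u` vanishes as well, the two
derivatives are orthogonal. -/
lemma orth_deriv {d : ℕ} {u w : ℝ → Fin d → ℝ} {u' w' : Fin d → ℝ}
    (hu : ∀ i, HasDerivAt (fun t => u t i) (u' i) 0)
    (hw : ∀ i, HasDerivAt (fun t => w t i) (w' i) 0)
    (h : ∀ t, ∑ i, u t i * w t i = 0) (hw0 : w 0 = 0) :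
    u 0 ⬝ᵥ w' = 0 ∧ (u 0 = 0 → u' ⬝ᵥ w' = 0) := by
  have hwt : ∀ i, Filter.Tendsto (fun t : ℝ => t⁻¹ * w t i) (nhdsWithin 0 {0}ᶜ) (nhds (w' i)) := by
    intro i
    simpa [hw0] using hasDerivAt_iff_tendsto_slope_zero.1 (hw i)
  constructor
  · have huc : ∀ i, Filter.Tendsto (fun t : ℝ => u t i) (nhdsWithin 0 {0}ᶜ) (nhds (u 0 i)) :=
      fun i => (hu i).continuousAt.tendsto.mono_left nhdsWithin_le_nhds
    have := tendsto_finsetSum Finset.univ fun i _ => (huc i).mul (hwt i)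
    refine tendsto_nhds_unique this ?_
    refine tendsto_const_nhds.congr fun t => ?_
    rw [← mul_zero t⁻¹, ← h t, Finset.mul_sum]
    exact Finset.sum_congr rfl fun i _ => by ring
  · intro hu0
    have hut : ∀ i, Filter.Tendsto (fun t : ℝ => t⁻¹ * u t i) (nhdsWithin 0 {0}ᶜ)
        (nhds (u' i)) := by
      intro i
      simpa [hu0] using hasDerivAt_iff_tendsto_slope_zero.1 (hu i)
    have := tendsto_finsetSum Finset.univ fun i _ => (hut i).mul (hwt i)
    refine tendsto_nhds_unique this ?_
    refine tendsto_const_nhds.congr fun t => ?_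
    rw [← mul_zero (t⁻¹ * t⁻¹), ← h t, Finset.mul_sum]
    exact Finset.sum_congr rfl fun i _ => by ring

lemma differentiable_pdR {d : ℕ} {V : (Fin d → ℝ) → ℝ} (hV : ContDiff ℝ (⊤ : ℕ∞) V) (i : Fin d) :
    Differentiable ℝ (pdR V i) := by
  have h : ContDiff ℝ 1 (fderiv ℝ V) := hV.fderiv_right (by norm_cast)
  exact (h.clm_apply contDiff_const).differentiable (by norm_num)

/-- At a nondegenerate critical point of `V`, orthogonality of `b` and `∇V` linearises to
`⟨B v, H v⟩ = 0`, that is, to antisymmetry of `Bᵀ H`. -/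
lemma jacM_dotProduct_hessM_eq_zero {d : ℕ} {V : (Fin d → ℝ) → ℝ} {b : (Fin d → ℝ) → Fin d → ℝ}
    (hV : ContDiff ℝ (⊤ : ℕ∞) V) (hb : ContDiff ℝ (⊤ : ℕ∞) b)
    (horth : ∀ x, ∑ i, b x i * gradV V x i = 0) {s : Fin d → ℝ} (hcrit : gradV V s = 0)
    (hsymm : (hessM V s)ᵀ = hessM V s) (hdet : (hessM V s).det ≠ 0) (v : Fin d → ℝ) :
    (jacM b s *ᵥ v) ⬝ᵥ (hessM V s *ᵥ v) = 0 := by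
  have hbd : ∀ i, DifferentiableAt ℝ (fun x => b x i) s := fun i =>
    (differentiable_pi.1 (hb.differentiable (by simp)) i) s
  have key : ∀ v : Fin d → ℝ, b s ⬝ᵥ (hessM V s *ᵥ v) = 0 ∧
      (b s = 0 → (jacM b s *ᵥ v) ⬝ᵥ (hessM V s *ᵥ v) = 0) := by
    intro v
    have := orth_deriv (u := fun t : ℝ => b (s + t • v)) (w := fun t : ℝ => gradV V (s + t • v))
      (u' := jacM b s *ᵥ v) (w' := hessM V s *ᵥ v) ?_ ?_ (fun t => horth _) (by simpa using hcrit)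
    · simpa using this
    · intro i
      have e : (jacM b s *ᵥ v) i = ∑ j, v j * pdR (fun x => b x i) j s :=
        dotProduct_comm (fun j => jacM b s i j) v
      rw [e]
      exact hasDerivAt_line (hbd i) v
    · intro i
      have e : (hessM V s *ᵥ v) i = ∑ j, v j * pdR (pdR V i) j s := by
        rw [← hsymm]
        exact dotProduct_comm (fun j => hessM V s j i) v
      rw [e]
      exact hasDerivAt_line (differentiable_pdR hV i s) v
  refine (key v).2 ?_
  have h := (key ((hessM V s)⁻¹ *ᵥ b s)).1
  rw [mulVec_mulVec, mul_nonsing_inv _ (isUnit_iff_ne_zero.2 hdet), one_mulVec] at h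
  exact dotProduct_self_eq_zero.1 h

/-- A nondegenerate symmetric form with one negative eigenvalue is positive on the orthogonal
complement of the corresponding eigenvector `v₀`. -/
lemma exists_pos_on_orth {d : ℕ} {H : Matrix (Fin d) (Fin d) ℝ} (hH : H.IsHermitian)
    (hdet : H.det ≠ 0) (hone : ∃! i : Fin d, hH.eigenvalues i < 0) :
    ∃ v₀ : Fin d → ℝ, ∀ z, v₀ ⬝ᵥ z = 0 → z ≠ 0 → 0 < z ⬝ᵥ (H *ᵥ z) := by
  obtain ⟨i₀, -, hi₀⟩ := hone
  set U : Matrix (Fin d) (Fin d) ℝ := (hH.eigenvectorUnitary).1 with hU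
  have hUU : U * Uᵀ = 1 := Unitary.coe_mul_star_self hH.eigenvectorUnitary
  have hspec : H = U * diagonal hH.eigenvalues * Uᵀ := by
    have := hH.spectral_theorem
    rw [Unitary.conjStarAlgAut_apply] at this
    exact this
  have hpos : ∀ i, i ≠ i₀ → 0 < hH.eigenvalues i := by
    intro i hi
    refine lt_of_le_of_ne (not_lt.1 fun h => hi (hi₀ i h)) fun h => hdet ?_
    rw [hH.det_eq_prod_eigenvalues]
    exact Finset.prod_eq_zero (Finset.mem_univ i) (by simp [← h])
  refine ⟨fun j => U j i₀, fun z hz hz0 => ?_⟩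
  set w := Uᵀ *ᵥ z with hw
  have hw0 : w i₀ = 0 := hz
  have hzw : z = U *ᵥ w := by rw [hw, mulVec_mulVec, hUU, one_mulVec]
  have hq : z ⬝ᵥ (H *ᵥ z) = ∑ i, hH.eigenvalues i * (w i * w i) := by
    have e : H *ᵥ z = U *ᵥ (diagonal hH.eigenvalues *ᵥ w) := by
      rw [hw, mulVec_mulVec, mulVec_mulVec, ← hspec]
    rw [e, dotProduct_mulVec, ← mulVec_transpose, ← hw]
    refine Finset.sum_congr rfl fun i _ => ?_
    rw [mulVec_diagonal]
    ring
  rw [hq]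
  have hwne : ∃ i, w i ≠ 0 := by
    by_contra! h
    exact hz0 (by rw [hzw, show w = 0 from funext h, mulVec_zero])
  obtain ⟨k, hk⟩ := hwne
  refine Finset.sum_pos' (fun i _ => ?_) ⟨k, Finset.mem_univ _, ?_⟩
  · rcases eq_or_ne i i₀ with rfl | hi
    · simp [hw0]
    · exact mul_nonneg (hpos i hi).le (mul_self_nonneg _)
  · exact mul_pos (hpos k fun h => hk (h ▸ hw0)) (mul_self_pos.2 hk)

/-- If the form of `H` is positive on a hyperplane and negative at `η`, it is positive on the
`H`-orthogonal complement of `η`: otherwise it would be nonpositive on the plane spanned by `η`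
and some `y`, which meets the hyperplane. -/
lemma pos_of_conj_neg {d : ℕ} {H : Matrix (Fin d) (Fin d) ℝ} (hsymm : Hᵀ = H)
    {v₀ : Fin d → ℝ} (hv₀ : ∀ z, v₀ ⬝ᵥ z = 0 → z ≠ 0 → 0 < z ⬝ᵥ (H *ᵥ z))
    {η y : Fin d → ℝ} (hη : η ⬝ᵥ (H *ᵥ η) < 0) (hy : y ⬝ᵥ (H *ᵥ η) = 0) (hy0 : y ≠ 0) :
    0 < y ⬝ᵥ (H *ᵥ y) := by
  have hy' : η ⬝ᵥ (H *ᵥ y) = 0 := by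
    rw [dotProduct_mulVec, ← mulVec_transpose, hsymm, dotProduct_comm, hy]
  by_contra! hneg
  have hη0 : η ≠ 0 := by rintro rfl; simp at hη
  have hvη : v₀ ⬝ᵥ η ≠ 0 := fun h => absurd (hv₀ η h hη0) (not_lt.2 hη.le)
  -- The combination of `η` and `y` lying in the hyperplane `v₀ᗮ`.
  set α := v₀ ⬝ᵥ y with hα
  set β := v₀ ⬝ᵥ η with hβ
  have hz : v₀ ⬝ᵥ (α • η - β • y) = 0 := by
    simp only [dotProduct_sub, dotProduct_smul, smul_eq_mul, ← hα, ← hβ]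
    ring
  have hz0 : α • η - β • y ≠ 0 := by
    intro h
    have h1 : (α • η - β • y) ⬝ᵥ (H *ᵥ η) = 0 := by rw [h, zero_dotProduct]
    simp only [sub_dotProduct, smul_dotProduct, smul_eq_mul, hy, mul_zero, sub_zero] at h1
    have h2 : α = 0 := (mul_eq_zero.1 h1).resolve_right hη.ne
    rw [h2, zero_smul, zero_sub, neg_eq_zero] at h
    exact hy0 ((smul_eq_zero.1 h).resolve_left hvη)
  have hp := hv₀ _ hz hz0
  simp only [mulVec_sub, mulVec_smul, sub_dotProduct, dotProduct_sub, smul_dotProduct,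
    dotProduct_smul, smul_eq_mul, hy, hy'] at hp
  nlinarith [mul_nonneg (mul_self_nonneg α) (neg_nonneg.2 hη.le),
    mul_nonneg (mul_self_nonneg β) (neg_nonneg.2 hneg)]

/-- If `⟨b, ∇V⟩ ≡ 0`, `s` is a saddle point of `V`, `μ < 0` is a negative eigenvalue of
`Hess V(s) + B(s)ᵀ` with unit eigenvector `ξ`, then
`M_V := Hess V(s) + 2|μ| ξξᵀ` is positive definite and `det M_V = − det Hess V(s)`. -/
theorem MV_posDef_and_det
    (d : ℕ) (hd : 1 ≤ d)
    (V : (Fin d → ℝ) → ℝ) (b : (Fin d → ℝ) → Fin d → ℝ)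
    (hV : ContDiff ℝ (⊤ : ℕ∞) V) (hb : ContDiff ℝ (⊤ : ℕ∞) b)
    (horth : ∀ x, ∑ i, b x i * gradV V x i = 0)
    (s : Fin d → ℝ)
    (hcrit : gradV V s = 0)
    (hherm : (hessM V s).IsHermitian)
    (hdet : (hessM V s).det ≠ 0)
    (hone : ∃! i : Fin d, hherm.eigenvalues i < 0)
    (μ : ℝ) (hμ : μ < 0)
    (ξ : Fin d → ℝ) (hξunit : ∑ i, ξ i * ξ i = 1)
    (hξ : (hessM V s + (jacM b s)ᵀ).mulVec ξ = μ • ξ) :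
    (hessM V s + (2 * |μ|) • Matrix.vecMulVec ξ ξ).PosDef ∧
      (hessM V s + (2 * |μ|) • Matrix.vecMulVec ξ ξ).det = -(hessM V s).det := by
  have hsymm : (hessM V s)ᵀ = hessM V s := by
    rw [← conjTranspose_eq_transpose_of_trivial]
    exact hherm
  have hunit : IsUnit (hessM V s).det := isUnit_iff_ne_zero.2 hdet
  have hBH := jacM_dotProduct_hessM_eq_zero hV hb horth hcrit hsymm hdet
  obtain ⟨v₀, hv₀⟩ := exists_pos_on_orth hherm hdet hone
  generalize hessM V s = H at *
  set η := H⁻¹ *ᵥ ξ with hη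
  have hHη : H *ᵥ η = ξ := by rw [hη, mulVec_mulVec, mul_nonsing_inv _ hunit, one_mulVec]
  have hsa : ∀ x y, x ⬝ᵥ (H *ᵥ y) = (H *ᵥ x) ⬝ᵥ y := by
    intro x y
    rw [dotProduct_mulVec, ← mulVec_transpose, hsymm]
  have hξ1 : ξ ⬝ᵥ ξ = 1 := hξunit
  have hηξ : μ * (η ⬝ᵥ ξ) = 1 := by
    have h := congrArg (fun u => η ⬝ᵥ u) hξ
    simp only [add_mulVec, dotProduct_add, dotProduct_smul, smul_eq_mul] at h
    rw [hsa, hHη, hξ1, dotProduct_mulVec, vecMul_transpose] at h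
    have h0 := hBH η
    rw [hHη] at h0
    rw [← h, h0, add_zero]
  have habs : |μ| = -μ := abs_of_neg hμ
  rw [habs]
  constructor
  · refine PosDef.of_dotProduct_mulVec_pos ?_ fun x hx => ?_
    · rw [IsHermitian, conjTranspose_eq_transpose_of_trivial, transpose_add, hsymm, transpose_smul,
        transpose_vecMulVec]
    · have hηneg : η ⬝ᵥ (H *ᵥ η) < 0 := by
        rw [hHη]
        by_contra! h
        nlinarith
      -- `c` is the coefficient of `η` in the `H`-orthogonal decomposition `x = c η + y`.
      set c := μ * (ξ ⬝ᵥ x) with hc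
      obtain ⟨y, hy⟩ : ∃ y, y = x - c • η := ⟨_, rfl⟩
      have hxy : x = c • η + y := by rw [hy]; abel
      have hyη : y ⬝ᵥ (H *ᵥ η) = 0 := by
        rw [hHη, hy, sub_dotProduct, smul_dotProduct, smul_eq_mul, hc, dotProduct_comm x]
        linear_combination -(ξ ⬝ᵥ x) * hηξ
      have hηy : η ⬝ᵥ (H *ᵥ y) = 0 := by rw [hsa, dotProduct_comm, hyη]
      have hxHx : x ⬝ᵥ (H *ᵥ x) = c * c * (η ⬝ᵥ ξ) + y ⬝ᵥ (H *ᵥ y) := by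
        rw [hxy]
        simp only [mulVec_add, mulVec_smul, add_dotProduct, dotProduct_add, smul_dotProduct,
          dotProduct_smul, smul_eq_mul, hyη, hηy]
        rw [hHη]
        ring
      have hval : star x ⬝ᵥ ((H + (2 * -μ) • vecMulVec ξ ξ) *ᵥ x)
          = -μ * ((ξ ⬝ᵥ x) * (ξ ⬝ᵥ x)) + y ⬝ᵥ (H *ᵥ y) := by
        rw [star_trivial, add_mulVec, dotProduct_add, hxHx, smul_mulVec, vecMulVec_mulVec]
        simp only [dotProduct_smul, smul_eq_mul, op_smul_eq_smul]
        rw [dotProduct_comm x ξ, hc]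
        linear_combination μ * (ξ ⬝ᵥ x) * (ξ ⬝ᵥ x) * hηξ
      rw [hval]
      rcases eq_or_ne y 0 with h0 | h0
      · have hξx : ξ ⬝ᵥ x ≠ 0 := by
          intro h
          apply hx
          rw [hxy, h0, hc, h]
          simp
        rw [h0]
        simpa using mul_pos (neg_pos.2 hμ) (mul_self_pos.2 hξx)
      · exact add_pos_of_nonneg_of_pos (mul_nonneg (neg_pos.2 hμ).le (mul_self_nonneg _))
          (pos_of_conj_neg hsymm hv₀ hηneg hyη h0)
  · have hfac : H + (2 * -μ) • vecMulVec ξ ξ = H * (1 + vecMulVec ((2 * -μ) • η) ξ) := by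
      rw [Matrix.mul_add, Matrix.mul_one, mul_vecMulVec, mulVec_smul, hHη, smul_vecMulVec]
    rw [hfac, det_mul, vecMulVec_eq Unit, det_one_add_replicateCol_mul_replicateRow,
      dotProduct_smul, smul_eq_mul, dotProduct_comm]
    linear_combination (-2 * H.det) * hηξ
end

section
/- Let V : ℝ^d → ℝ and b : ℝ^d → ℝ^d be smooth with ⟨b(x), ∇V(x)⟩ = 0 for all x ∈ ℝ^d, and let u ∈ ℝ^d be a nondegenerate critical point of V (∇V(u) = 0 and Hess V(u) invertible). Then there exist a neighborhood O of u and a smooth map J : ℝ^d → M_d(ℝ) (d×d real matrices) such that b(x) = J(x)·∇V(x) for all x ∈ O, the matrix J(u) is antisymmetric (J(u)ᵀ = −J(u)), and J(u) = B(u)·(Hess V(u))⁻¹, where B(u) is the Jacobian matrix of b at u. -/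
/-!
The proof rests on Hadamard's lemma: a smooth vector field `c` with `c u = 0` factors as `c x = A
x (x - u)` with `A` smooth and `A u` equal to the Jacobian of `c` at `u`. The coefficient `A x` is
the average of the Jacobian over the segment from `u` to `x`, so its smoothness is differentiation
under the integral sign (`contDiff_integral_zero_one`).

Write `∇V x = H x (x - u)`, where `H u = Hess V(u)` is invertible (the Jacobian of `∇V` is the
transpose of the matrix `hessM`, so second derivatives have to commute). Along the line `x = u + t
y`, orthogonality reads `t ⟨b x, H x y⟩ = 0`; dividing by `t` and letting `t → 0` gives `⟨b u, H u
y⟩ = 0` for all `y`, so `b u = 0`. Hence `b x = A x (x - u)` as well, and dividing by `t²` instead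
gives `⟨A u y, H u y⟩ = 0` for all `y`; putting `z = H u y`, the quadratic form of `A u (H u)⁻¹`
vanishes, so this matrix is antisymmetric. Near `u`, `H x` is invertible and `b x = A x (H x)⁻¹ ∇V
x`. To get a map that is smooth on the whole space, write `(H x)⁻¹` as the adjugate of `H x`
divided by its determinant, and replace that determinant by a nowhere vanishing smooth function
that agrees with it near `u` (`exists_contDiff_ne_zero_eventuallyEq`).
-/

open Matrix

/-- Integrals over `[0, 1]` of jointly `C^n` functions are `C^n` in the parameter. The induction on
`n` replaces the values of `F` by linear maps, which is why the target space is arbitrary. -/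
lemma contDiff_nat_integral_zero_one {H : Type} [NormedAddCommGroup H] [NormedSpace ℝ H]
    [FiniteDimensional ℝ H] (n : ℕ) :
    ∀ {E : Type} [NormedAddCommGroup E] [NormedSpace ℝ E] [CompleteSpace E] (F : H × ℝ → E),
      ContDiff ℝ (n : WithTop ℕ∞) F →
        ContDiff ℝ (n : WithTop ℕ∞) (fun x => ∫ t in (0 : ℝ)..1, F (x, t)) := by
  induction n with
  | zero =>
    intro E _ _ _ F hF
    simp only [Nat.cast_zero, contDiff_zero] at hF ⊢
    exact intervalIntegral.continuous_parametric_intervalIntegral_of_continuous' (by fun_prop) _ _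
  | succ n ih =>
    intro E _ _ _ F hF
    have : ProperSpace H := FiniteDimensional.proper ℝ H
    set G : H × ℝ → H →L[ℝ] E := fun p => (fderiv ℝ F p).comp (ContinuousLinearMap.inl ℝ H ℝ)
      with hG
    have hGs : ContDiff ℝ (n : WithTop ℕ∞) G := by
      have h1 : ContDiff ℝ (n : WithTop ℕ∞) (fderiv ℝ F) :=
        hF.fderiv_right (by push_cast; exact le_rfl)
      exact h1.clm_comp contDiff_const
    have hFd : Differentiable ℝ F := hF.differentiable (by simp)
    have hGd : ∀ x t, HasFDerivAt (fun x => F (x, t)) (G (x, t)) x := fun x t =>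
      (hFd (x, t)).hasFDerivAt.comp x (hasFDerivAt_prodMk_left x t)
    have hFc : Continuous F := hF.continuous
    have hGc : Continuous G := hGs.continuous
    push_cast
    rw [contDiff_succ_iff_hasFDerivAt]
    refine ⟨fun x => ∫ t in (0 : ℝ)..1, G (x, t), ih G hGs, fun x₀ => ?_⟩
    obtain ⟨C, hC⟩ := ((isCompact_closedBall x₀ 1).prod
      (isCompact_Icc (a := (0 : ℝ)) (b := 1))).exists_bound_of_continuousOn hGc.continuousOn
    refine intervalIntegral.hasFDerivAt_integral_of_dominated_of_fderiv_le
      (F := fun x t => F (x, t)) (F' := fun x t => G (x, t)) (bound := fun _ => C)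
      (Metric.closedBall_mem_nhds x₀ one_pos) ?_ ?_ ?_ ?_ ?_ ?_
    · exact .of_forall fun x => (by fun_prop : Continuous fun t => F (x, t)).aestronglyMeasurable
    · exact (by fun_prop : Continuous fun t => F (x₀, t)).intervalIntegrable _ _
    · exact (by fun_prop : Continuous fun t => G (x₀, t)).aestronglyMeasurable
    · refine .of_forall fun t ht x hx => hC (x, t) ⟨hx, ?_⟩
      rw [Set.uIoc_of_le zero_le_one] at ht
      exact ⟨ht.1.le, ht.2⟩
    · exact intervalIntegrable_const
    · exact .of_forall fun t _ x _ => hGd x t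

lemma contDiff_integral_zero_one {H E : Type} [NormedAddCommGroup H] [NormedSpace ℝ H]
    [FiniteDimensional ℝ H] [NormedAddCommGroup E] [NormedSpace ℝ E] [CompleteSpace E]
    (F : H × ℝ → E) (hF : ContDiff ℝ (⊤ : ℕ∞) F) :
    ContDiff ℝ (⊤ : ℕ∞) (fun x => ∫ t in (0 : ℝ)..1, F (x, t)) :=
  contDiff_infty.2 fun n => contDiff_nat_integral_zero_one n F (contDiff_infty.1 hF n)

lemma fderiv_eq_sum_pdR {d : ℕ} (f : (Fin d → ℝ) → ℝ) (x v : Fin d → ℝ) :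
    fderiv ℝ f x v = ∑ j, pdR f j x * v j := by
  conv_lhs => rw [pi_eq_sum_univ' v, map_sum]
  refine Finset.sum_congr rfl fun j _ => ?_
  rw [map_smul, smul_eq_mul, mul_comm, pdR]

/-- Hadamard's lemma for a vector field vanishing at `u`. -/
lemma exists_hadamard {d : ℕ} (c : (Fin d → ℝ) → Fin d → ℝ) (u : Fin d → ℝ)
    (hc : ∀ i, ContDiff ℝ (⊤ : ℕ∞) (fun x => c x i)) (hu : c u = 0) :
    ∃ A : (Fin d → ℝ) → Matrix (Fin d) (Fin d) ℝ,
      (∀ i j, ContDiff ℝ (⊤ : ℕ∞) (fun x => A x i j)) ∧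
      (∀ x, c x = (A x).mulVec (x - u)) ∧ A u = jacM c u := by
  refine ⟨fun x i j => ∫ t in (0 : ℝ)..1, pdR (fun y => c y i) j (u + t • (x - u)),
    fun i j => ?_, fun x => ?_, ?_⟩
  · refine contDiff_integral_zero_one
      (fun p : (Fin d → ℝ) × ℝ => pdR (fun y => c y i) j (u + p.2 • (p.1 - u))) ?_
    exact (contDiff_pdR (hc i) j).comp (contDiff_const.add
      (contDiff_snd.smul (contDiff_fst.sub contDiff_const)))
  · ext i
    have hcont : ∀ j, Continuous fun t : ℝ => pdR (fun y => c y i) j (u + t • (x - u)) :=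
      fun j => (contDiff_pdR (hc i) j).continuous.comp (by fun_prop)
    have hd : ∀ t : ℝ, HasDerivAt (fun t : ℝ => c (u + t • (x - u)) i)
        (∑ j, pdR (fun y => c y i) j (u + t • (x - u)) * (x - u) j) t := fun t => by
      rw [← fderiv_eq_sum_pdR]
      have h1 : HasDerivAt (fun t : ℝ => u + t • (x - u)) (x - u) t := by
        simpa using ((hasDerivAt_id t).smul_const (x - u)).const_add u
      exact (((hc i).differentiable (by simp)) _).hasFDerivAt.comp_hasDerivAt t h1
    have key := intervalIntegral.integral_eq_sub_of_hasDerivAt (a := 0) (b := 1)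
      (fun t _ => hd t) ((continuous_finsetSum _ fun j _ =>
        (hcont j).mul continuous_const).intervalIntegrable _ _)
    rw [intervalIntegral.integral_finsetSum fun j _ => Continuous.intervalIntegrable
      (by have := hcont j; fun_prop) _ _] at key
    simp only [intervalIntegral.integral_mul_const, one_smul, zero_smul, add_zero,
      add_sub_cancel, hu, Pi.zero_apply, sub_zero] at key
    exact key.symm
  · ext i j
    simp [jacM]

/-- A smooth function that is nonzero at `u` agrees near `u` with a smooth nowhere vanishing one:
interpolate, by means of a bump function, between the function and its value at `u`. -/
lemma exists_contDiff_ne_zero_eventuallyEq {d : ℕ} (f : (Fin d → ℝ) → ℝ) (u : Fin d → ℝ)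
    (hf : ContDiff ℝ (⊤ : ℕ∞) f) (hu : f u ≠ 0) :
    ∃ g : (Fin d → ℝ) → ℝ, ContDiff ℝ (⊤ : ℕ∞) g ∧ (∀ x, g x ≠ 0) ∧ ∀ᶠ x in nhds u, g x = f x := by
  have hs : {x | 0 < f x * f u} ∈ nhds u :=
    (isOpen_lt continuous_const (hf.continuous.mul continuous_const)).mem_nhds
      (mul_self_pos.2 hu)
  obtain ⟨r, hr, hrs⟩ := Metric.mem_nhds_iff.1 hs
  let χ : ContDiffBump u := ⟨r / 3, r / 2, by linarith, by linarith⟩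
  refine ⟨fun x => χ x * f x + (1 - χ x) * f u,
    (χ.contDiff.mul hf).add ((contDiff_const.sub χ.contDiff).mul contDiff_const),
    fun x hx => ?_, ?_⟩
  · have hpos : 0 < (χ x * f x + (1 - χ x) * f u) * f u := by
      have h2 : 0 < f u * f u := mul_self_pos.2 hu
      by_cases hxr : dist x u < r
      · have h1 : 0 < f x * f u := hrs hxr
        have h3 := χ.nonneg (x := x)
        have h4 := χ.le_one (x := x)
        rcases h3.eq_or_lt with h0 | h0
        · rw [← h0]; linarith
        · nlinarith [mul_pos h0 h1, mul_nonneg (sub_nonneg.2 h4) h2.le]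
      · have h0 : χ x = 0 := χ.zero_of_le_dist (by
          change r / 2 ≤ _
          linarith [not_lt.1 hxr])
        rw [h0]; linarith
    simp only at hx
    rw [hx, zero_mul] at hpos
    exact hpos.false
  · filter_upwards [χ.eventuallyEq_one] with x hx
    simp [hx]

lemma hessM_transpose {d : ℕ} (V : (Fin d → ℝ) → ℝ) (hV : ContDiff ℝ (⊤ : ℕ∞) V)
    (u : Fin d → ℝ) : (hessM V u)ᵀ = hessM V u := by
  have hs : IsSymmSndFDerivAt ℝ V u := hV.contDiffAt.isSymmSndFDerivAt (by
    rw [minSmoothness_of_isRCLikeNormedField]; exact WithTop.coe_le_coe.2 le_top)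
  have hd : DifferentiableAt ℝ (fderiv ℝ V) u :=
    ((contDiff_infty_iff_fderiv.1 hV).2.differentiable (by simp)) u
  have h : ∀ i j, hessM V u i j = fderiv ℝ (fderiv ℝ V) u (Pi.single i 1) (Pi.single j 1) := by
    intro i j
    have h1 : HasFDerivAt (pdR V j) ((fderiv ℝ (fderiv ℝ V) u).flip (Pi.single j 1)) u := by
      have h2 := hd.hasFDerivAt.clm_apply (hasFDerivAt_const (Pi.single j (1 : ℝ)) u)
      simp only [ContinuousLinearMap.comp_zero, zero_add] at h2
      exact h2
    rw [hessM, pdR, h1.fderiv]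
    rfl
  ext i j
  rw [transpose_apply, h, h, hs.eq]

/-- Cancellation of a factor `t` at `t = 0`, by continuity. -/
lemma eq_zero_of_mul_eq_zero {f : ℝ → ℝ} (hf : Continuous f) (h : ∀ t, t * f t = 0) :
    f 0 = 0 := by
  have : f = fun _ => 0 := hf.ext_on (dense_compl_singleton 0) continuous_const
    fun t ht => (mul_eq_zero.1 (h t)).resolve_left ht
  rw [this]

/-- If `⟨A y, H y⟩ = 0` for all `y` and `H` is invertible, then `A H⁻¹` is antisymmetric:
with `z = H y` the hypothesis says that its quadratic form `⟨A H⁻¹ z, z⟩` vanishes. -/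
lemma transpose_mul_inv_eq_neg {d : ℕ} (A H : Matrix (Fin d) (Fin d) ℝ) (hH : H.det ≠ 0)
    (h : ∀ y, A *ᵥ y ⬝ᵥ H *ᵥ y = 0) : (A * H⁻¹)ᵀ = -(A * H⁻¹) := by
  set J := A * H⁻¹ with hJ
  have hz : ∀ z, J *ᵥ z ⬝ᵥ z = 0 := fun z => by
    have := h (H⁻¹ *ᵥ z)
    rwa [mulVec_mulVec, mulVec_mulVec, mul_nonsing_inv _ (isUnit_iff_ne_zero.2 hH),
      one_mulVec] at this
  ext i j
  have hij := hz (Pi.single i 1 + Pi.single j 1)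
  have hi := hz (Pi.single i 1)
  have hj := hz (Pi.single j 1)
  simp only [mulVec_add, dotProduct_add, mulVec_single_one, dotProduct_single_one,
    Pi.add_apply, col_apply] at hij hi hj
  simp only [transpose_apply, Matrix.neg_apply]
  linarith

/-- If `⟨b, ∇V⟩ ≡ 0` and `u` is a nondegenerate critical point of `V`, then near `u`
one can write `b = J ∇V` with `J` a smooth matrix-valued map such that `J(u)` is
antisymmetric and `J(u) = B(u) (Hess V(u))⁻¹`. -/
theorem local_structure_of_b
    (d : ℕ) (hd : 1 ≤ d)
    (V : (Fin d → ℝ) → ℝ) (b : (Fin d → ℝ) → Fin d → ℝ)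
    (hV : ContDiff ℝ (⊤ : ℕ∞) V) (hb : ContDiff ℝ (⊤ : ℕ∞) b)
    (horth : ∀ x, ∑ i, b x i * gradV V x i = 0)
    (u : Fin d → ℝ)
    (hcrit : gradV V u = 0)
    (hdet : (hessM V u).det ≠ 0) :
    ∃ O ∈ nhds u, ∃ J : (Fin d → ℝ) → Matrix (Fin d) (Fin d) ℝ,
      (∀ i j, ContDiff ℝ (⊤ : ℕ∞) (fun x => J x i j)) ∧
      (∀ x ∈ O, b x = (J x).mulVec (gradV V x)) ∧
      (J u)ᵀ = -(J u) ∧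
      J u = jacM b u * (hessM V u)⁻¹ := by
  obtain ⟨H, hHs, hHx, hHu⟩ := exists_hadamard (gradV V) u (fun i => contDiff_pdR hV i) hcrit
  have hHu' : H u = hessM V u := by
    rw [hHu, ← hessM_transpose V hV u]
    rfl
  have hdet' : (H u).det ≠ 0 := hHu' ▸ hdet
  have hHc : Continuous H := continuous_matrix fun i j => (hHs i j).continuous
  have horth' : ∀ x, b x ⬝ᵥ gradV V x = 0 := horth
  have hbu : b u = 0 := by
    have h1 : ∀ y, b u ⬝ᵥ H u *ᵥ y = 0 := fun y => by
      have := eq_zero_of_mul_eq_zero (f := fun t => b (u + t • y) ⬝ᵥ H (u + t • y) *ᵥ y)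
        (((hb.continuous.comp (by fun_prop)).dotProduct
          ((hHc.comp (by fun_prop)).matrix_mulVec continuous_const))) fun t => by
        have := horth' (u + t • y)
        rwa [hHx, add_sub_cancel_left, mulVec_smul, dotProduct_smul, smul_eq_mul] at this
      simpa using this
    have h2 := h1 ((H u)⁻¹ *ᵥ b u)
    rw [mulVec_mulVec, mul_nonsing_inv _ (isUnit_iff_ne_zero.2 hdet'), one_mulVec] at h2
    exact dotProduct_self_eq_zero.1 h2
  obtain ⟨A, hAs, hAx, hAu⟩ := exists_hadamard b u (fun i => contDiff_pi.1 hb i) hbu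
  have hAc : Continuous A := continuous_matrix fun i j => (hAs i j).continuous
  have hAH : ∀ y, A u *ᵥ y ⬝ᵥ H u *ᵥ y = 0 := fun y => by
    have hcont : Continuous fun t : ℝ => A (u + t • y) *ᵥ y ⬝ᵥ H (u + t • y) *ᵥ y :=
      ((hAc.comp (by fun_prop)).matrix_mulVec continuous_const).dotProduct
        ((hHc.comp (by fun_prop)).matrix_mulVec continuous_const)
    have := eq_zero_of_mul_eq_zero hcont fun t => by
      have := horth' (u + t • y)
      rw [hHx, hAx, add_sub_cancel_left, mulVec_smul, mulVec_smul, dotProduct_smul,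
        smul_dotProduct, smul_eq_mul, smul_eq_mul] at this
      rcases mul_eq_zero.1 this with h | h
      · rw [h, zero_mul]
      · exact h
    simpa using this
  have hdets : ContDiff ℝ (⊤ : ℕ∞) fun x => (H x).det := by
    simp only [det_apply']
    exact ContDiff.sum fun σ _ => contDiff_const.mul (contDiff_prod fun i _ => hHs _ _)
  have hadjs : ∀ i j, ContDiff ℝ (⊤ : ℕ∞) fun x => (H x).adjugate i j := fun i j => by
    simp only [adjugate_apply, det_apply']
    refine ContDiff.sum fun σ _ => contDiff_const.mul (contDiff_prod fun k _ => ?_)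
    by_cases hk : σ k = j
    · simp only [hk, updateRow_self]
      exact contDiff_const
    · simp only [updateRow_ne hk]
      exact hHs _ _
  obtain ⟨g, hgs, hg0, hgu⟩ := exists_contDiff_ne_zero_eventuallyEq _ u hdets hdet'
  have hJu : (g u)⁻¹ • (A u * (H u).adjugate) = A u * (H u)⁻¹ := by
    rw [hgu.self_of_nhds, inv_def, Ring.inverse_eq_inv', Matrix.mul_smul]
  refine ⟨{x | g x = (H x).det}, hgu, fun x => (g x)⁻¹ • (A x * (H x).adjugate),
    fun i j => ?_, fun x hx => ?_, ?_, ?_⟩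
  · simp only [Matrix.smul_apply, Matrix.mul_apply, smul_eq_mul]
    exact (hgs.inv hg0).mul (ContDiff.sum fun k _ => (hAs i k).mul (hadjs k j))
  · rw [hHx, mulVec_mulVec, smul_mul, Matrix.mul_assoc, adjugate_mul, ← show g x = _ from hx,
      Matrix.mul_smul, Matrix.mul_one, smul_smul, inv_mul_cancel₀ (hg0 x), one_smul, hAx]
  · simp only [hJu]
    exact transpose_mul_inv_eq_neg _ _ hdet' hAH
  · simp only [hJu]
    rw [hAu, hHu']
end

section
/- Let H be a real symmetric invertible d×d matrix having exactly one negative eigenvalue, and let ξ ∈ ℝ^d be a nonzero vector with ⟨H⁻¹ξ, ξ⟩ < 0. Then for every X ∈ ℝ^d with X ≠ 0 and ⟨X, ξ⟩ = 0, one has ⟨HX, X⟩ > 0. In other words, the hyperplane ξ^⊥ meets the cone {X ∈ ℝ^d : ⟨HX, X⟩ ≤ 0} only at the origin. -/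
open Matrix

/-!
Write `Q(X) = ⟨HX, X⟩` and `Y = H⁻¹ξ`, so that `Q(Y) = ⟨ξ, H⁻¹ξ⟩ < 0` and the hyperplane `ξ^⊥` is
the `Q`-orthogonal complement of `Y`. In the coordinates of an orthonormal eigenbasis, `Q` is
diagonal, and it is positive definite on the hyperplane where the coordinate of the negative
eigenvalue vanishes (`quadForm_pos`). Given `X ⊥ ξ` with `Q(X) ≤ 0`, let `x₀`, `y₀` be the
coordinates of `X`, `Y` along the negative eigenvector. Then `Z = y₀ X - x₀ Y` lies in that
hyperplane while `Q(Z) = y₀² Q(X) + x₀² Q(Y) ≤ 0`, so `Z = 0` and `x₀² Q(Y) = 0`; hence `x₀ = 0`,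
and as `y₀ ≠ 0` (because `Q(Y) < 0`), `X = 0`.
-/

/-- Coordinates of `X` in the orthonormal eigenbasis of `H`. -/
noncomputable def eigCoord {d : ℕ} {H : Matrix (Fin d) (Fin d) ℝ} (hH : H.IsHermitian)
    (X : Fin d → ℝ) : Fin d → ℝ :=
  (star (hH.eigenvectorUnitary : Matrix (Fin d) (Fin d) ℝ)) *ᵥ X

lemma eigCoord_ne_zero {d : ℕ} {H : Matrix (Fin d) (Fin d) ℝ} (hH : H.IsHermitian)
    {X : Fin d → ℝ} (hX : X ≠ 0) : eigCoord hH X ≠ 0 := by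
  intro h
  apply hX
  have h2 : (hH.eigenvectorUnitary : Matrix (Fin d) (Fin d) ℝ) *ᵥ eigCoord hH X = X := by
    rw [eigCoord, mulVec_mulVec, Unitary.mul_star_self_of_mem hH.eigenvectorUnitary.2, one_mulVec]
  rw [← h2, h, mulVec_zero]

lemma quadForm_eq_sum_eigCoord {d : ℕ} {H : Matrix (Fin d) (Fin d) ℝ} (hH : H.IsHermitian)
    (X : Fin d → ℝ) :
    (H *ᵥ X) ⬝ᵥ X = ∑ i, hH.eigenvalues i * eigCoord hH X i ^ 2 := by
  have hs := hH.spectral_theorem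
  rw [Unitary.conjStarAlgAut_apply] at hs
  have h1 : X ᵥ* (hH.eigenvectorUnitary : Matrix (Fin d) (Fin d) ℝ) = eigCoord hH X := by
    rw [eigCoord, star_eq_conjTranspose, conjTranspose_eq_transpose_of_trivial, mulVec_transpose]
  rw [dotProduct_comm]
  conv_lhs => rw [hs]
  rw [← mulVec_mulVec, ← mulVec_mulVec, dotProduct_mulVec, h1]
  change eigCoord hH X ⬝ᵥ (diagonal _ *ᵥ eigCoord hH X) = _
  refine Finset.sum_congr rfl fun i _ => ?_
  rw [mulVec_diagonal]
  simp only [Function.comp_apply, RCLike.ofReal_real_eq_id, id_eq]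
  ring

/-- The form `⟨HZ, Z⟩` is positive definite on the orthogonal complement of the `i₀`-th eigenvector
when all the other eigenvalues are positive. -/
lemma quadForm_pos {d : ℕ} {H : Matrix (Fin d) (Fin d) ℝ} (hH : H.IsHermitian) {i₀ : Fin d}
    (hpos : ∀ i, i ≠ i₀ → 0 < hH.eigenvalues i) {Z : Fin d → ℝ} (hZ : Z ≠ 0)
    (h0 : eigCoord hH Z i₀ = 0) : 0 < (H *ᵥ Z) ⬝ᵥ Z := by
  rw [quadForm_eq_sum_eigCoord hH]
  obtain ⟨j, hj⟩ := Function.ne_iff.mp (eigCoord_ne_zero hH hZ)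
  rw [Pi.zero_apply] at hj
  refine Finset.sum_pos' (fun i _ => ?_) ⟨j, Finset.mem_univ j, ?_⟩
  · by_cases hi : i = i₀
    · rw [hi, h0]; simp
    · exact mul_nonneg (hpos i hi).le (sq_nonneg _)
  · have hji : j ≠ i₀ := fun h => hj (h ▸ h0)
    exact mul_pos (hpos j hji) (by positivity)

/-- If `H` is a real symmetric invertible `d×d` matrix with exactly one negative
eigenvalue (counted with multiplicity) and `ξ ≠ 0` satisfies `⟨H⁻¹ξ, ξ⟩ < 0`, then the
hyperplane `ξ^⊥` meets the cone `{X : ⟨HX, X⟩ ≤ 0}` only at the origin, i.e.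
`⟨HX, X⟩ > 0` for every nonzero `X ⊥ ξ`. -/
theorem hyperplane_misses_nonpositive_cone
    (d : ℕ) (hd : 1 ≤ d)
    (H : Matrix (Fin d) (Fin d) ℝ)
    (hH : H.IsHermitian)
    (hdet : H.det ≠ 0)
    (hone : ∃! i : Fin d, hH.eigenvalues i < 0)
    (ξ : Fin d → ℝ) (hξ : ξ ≠ 0)
    (hneg : ∑ i, (H⁻¹.mulVec ξ) i * ξ i < 0) :
    ∀ X : Fin d → ℝ, X ≠ 0 → (∑ i, X i * ξ i = 0) → 0 < ∑ i, (H.mulVec X) i * X i := by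
  obtain ⟨i₀, hi₀, huniq⟩ := hone
  have hpos : ∀ i, i ≠ i₀ → 0 < hH.eigenvalues i := by
    intro i hi
    -- Invertibility rules out a zero eigenvalue.
    have hne : hH.eigenvalues i ≠ 0 := by
      intro h
      apply hdet
      rw [hH.det_eq_prod_eigenvalues]
      exact Finset.prod_eq_zero (Finset.mem_univ i) (by simp [h])
    exact lt_of_le_of_ne (not_lt.mp fun h => hi (huniq i h)) hne.symm
  intro X hX hXξ
  change H⁻¹ *ᵥ ξ ⬝ᵥ ξ < 0 at hneg
  change X ⬝ᵥ ξ = 0 at hXξ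
  change 0 < (H *ᵥ X) ⬝ᵥ X
  set Y := H⁻¹ *ᵥ ξ with hY
  have hHY : H *ᵥ Y = ξ := by
    rw [hY, mulVec_mulVec, mul_nonsing_inv _ (isUnit_iff_ne_zero.mpr hdet), one_mulVec]
  have hQY : (H *ᵥ Y) ⬝ᵥ Y < 0 := by rwa [hHY, dotProduct_comm]
  have hYX : (H *ᵥ Y) ⬝ᵥ X = 0 := by rwa [hHY, dotProduct_comm]
  have hXY : (H *ᵥ X) ⬝ᵥ Y = 0 := by
    have hT : Hᵀ = H := by rw [← conjTranspose_eq_transpose_of_trivial]; exact hH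
    rw [dotProduct_comm, dotProduct_mulVec, ← mulVec_transpose, hT, hYX]
  have hY0 : Y ≠ 0 := by
    intro h
    simp [h] at hQY
  by_contra! hQX
  set x₀ := eigCoord hH X i₀ with hx₀
  set y₀ := eigCoord hH Y i₀ with hy₀
  have hy₀ne : y₀ ≠ 0 := fun h => lt_asymm hQY (quadForm_pos hH hpos hY0 h)
  have hQZ : (H *ᵥ (y₀ • X - x₀ • Y)) ⬝ᵥ (y₀ • X - x₀ • Y)
      = y₀ ^ 2 * ((H *ᵥ X) ⬝ᵥ X) + x₀ ^ 2 * ((H *ᵥ Y) ⬝ᵥ Y) := by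
    simp only [mulVec_sub, mulVec_smul, sub_dotProduct, dotProduct_sub, smul_dotProduct,
      dotProduct_smul, hXY, hYX, smul_eq_mul]
    ring
  have hZ₀ : eigCoord hH (y₀ • X - x₀ • Y) i₀ = 0 := by
    have : eigCoord hH (y₀ • X - x₀ • Y) i₀ = y₀ * x₀ - x₀ * y₀ := by
      rw [hx₀, hy₀]
      simp only [eigCoord, mulVec_sub, mulVec_smul, Pi.sub_apply, Pi.smul_apply, smul_eq_mul]
    rw [this]; ring
  have hZ : y₀ • X - x₀ • Y = 0 := by
    by_contra hne
    have := quadForm_pos hH hpos hne hZ₀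
    nlinarith [mul_nonneg (sq_nonneg y₀) (neg_nonneg.mpr hQX),
      mul_nonneg (sq_nonneg x₀) (neg_nonneg.mpr hQY.le)]
  have hx₀z : x₀ = 0 := by
    by_contra hne
    rw [hZ, mulVec_zero, zero_dotProduct] at hQZ
    have hx2 : 0 < x₀ ^ 2 := by positivity
    nlinarith [mul_nonneg (sq_nonneg y₀) (neg_nonneg.mpr hQX), mul_pos hx2 (neg_pos.mpr hQY)]
  rw [hx₀z, zero_smul, sub_zero] at hZ
  exact (smul_ne_zero hy₀ne hX) hZ
end
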